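/- arXiv:2005.13777 — 2 statements merged into one kernel-verified Lean document; each statement's English description precedes it below -/
import Mathlib

section
/- For equivalence relations E and F on ℕ, if E is computably reducible to F then E⁺ is computably reducible to F⁺. -/
/-- The `e`-th partial computable function. -/
def phi (e : ℕ) : ℕ →. ℕ :=
  Nat.Partrec.Code.eval (Denumerable.ofNat Nat.Partrec.Code e)

/-- `W_e`, the `e`-th c.e. set: the domain of `φ_e`. -/
def WSet (e : ℕ) : Set ℕ := (phi e).Dom

/-- The `E`-equivalence class of `k`. -/
def classOf (E : ℕ → ℕ → Prop) (k : ℕ) : Set ℕ := {x | E k x}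

/-- Computable reducibility of binary relations on ℕ. -/
def Reduces (E F : ℕ → ℕ → Prop) : Prop :=
  ∃ f : ℕ → ℕ, Computable f ∧ ∀ m n, E m n ↔ F (f m) (f n)

/-- The computable FS-jump of `E`: `e E⁺ e'` iff the set of `E`-classes of elements
of `ran φ_e` equals the set of `E`-classes of elements of `ran φ_{e'}`. -/
def FSJump (E : ℕ → ℕ → Prop) : ℕ → ℕ → Prop :=
  fun e e' => classOf E '' (phi e).ran = classOf E '' (phi e').ran

/-!
Composing `φ_e` with a reduction `f` of `E` to `F` is effective in the index `e` and turns the range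
of `φ_e` into its image under `f`. Since `f` induces an injection from `E`-classes to `F`-classes,
two sets have the same `E`-classes exactly when their images under `f` have the same `F`-classes.
-/

section Images

variable {α β γ : Type*}

theorem image_eq_image_of_factorsThrough {u : α → β} {v : α → γ} (h : v.FactorsThrough u)
    {s t : Set α} (hst : u '' s = u '' t) : v '' s = v '' t := by
  have image_subset {s t : Set α} (hst : u '' s ⊆ u '' t) : v '' s ⊆ v '' t := by
    rintro _ ⟨a, ha, rfl⟩
    obtain ⟨b, hb, hba⟩ := hst (Set.mem_image_of_mem u ha)
    exact ⟨b, hb, h hba⟩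
  exact (image_subset hst.subset).antisymm (image_subset hst.superset)

theorem image_eq_image_congr {u : α → β} {v : α → γ} (h : ∀ a b, u a = u b ↔ v a = v b)
    (s t : Set α) : u '' s = u '' t ↔ v '' s = v '' t :=
  ⟨image_eq_image_of_factorsThrough fun a b => (h a b).1,
    image_eq_image_of_factorsThrough fun a b => (h a b).2⟩

theorem ran_coe_comp (f : β → γ) (p : α →. β) : ((f : β →. γ).comp p).ran = f '' p.ran := by
  ext c
  have mem_comp_iff (a : α) : c ∈ (f : β →. γ).comp p a ↔ ∃ b ∈ p a, f b = c :=
    Part.mem_bind_iff.trans <|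
      exists_congr fun _ => and_congr_right fun _ => Part.mem_some_iff.trans eq_comm
  constructor
  · rintro ⟨a, hc⟩
    obtain ⟨b, hb, hbc⟩ := (mem_comp_iff a).1 hc
    exact ⟨b, ⟨a, hb⟩, hbc⟩
  · rintro ⟨b, ⟨a, hb⟩, hbc⟩
    exact ⟨a, (mem_comp_iff a).2 ⟨b, hb, hbc⟩⟩

end Images

theorem classOf_eq_classOf_iff {E : ℕ → ℕ → Prop} (hE : Equivalence E) {a b : ℕ} :
    classOf E a = classOf E b ↔ E a b := by
  constructor
  · intro hab
    have hb : b ∈ classOf E b := hE.refl b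
    rwa [← hab] at hb
  · intro hab
    ext x
    exact ⟨hE.trans (hE.symm hab), hE.trans hab⟩

theorem exists_primrec_phi_eq_comp {p : ℕ →. ℕ} (hp : Nat.Partrec p) :
    ∃ g : ℕ → ℕ, Primrec g ∧ ∀ e, phi (g e) = p.comp (phi e) := by
  obtain ⟨c, rfl⟩ := Nat.Partrec.Code.exists_code.1 hp
  refine ⟨fun e => Encodable.encode (c.comp (Denumerable.ofNat Nat.Partrec.Code e)), ?_, ?_⟩
  · exact Primrec.encode.comp
      (Nat.Partrec.Code.primrec₂_comp.comp (Primrec.const c) (Primrec.ofNat Nat.Partrec.Code))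
  · intro e
    rw [phi, Denumerable.ofNat_encode]
    rfl

theorem exists_primrec_ran_phi_eq_image {f : ℕ → ℕ} (hf : Computable f) :
    ∃ g : ℕ → ℕ, Primrec g ∧ ∀ e, (phi (g e)).ran = f '' (phi e).ran := by
  obtain ⟨g, hg, hphi⟩ := exists_primrec_phi_eq_comp (Partrec.nat_iff.1 hf.partrec)
  exact ⟨g, hg, fun e => by rw [hphi, ran_coe_comp]⟩

/-- If `E ≤ F` then `E⁺ ≤ F⁺`. -/
theorem jump_monotone (E F : ℕ → ℕ → Prop) (hE : Equivalence E) (hF : Equivalence F)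
    (h : Reduces E F) :
    Reduces (FSJump E) (FSJump F) := by
  obtain ⟨f, hf, hEF⟩ := h
  obtain ⟨g, hg, hran⟩ := exists_primrec_ran_phi_eq_image hf
  have classOf_iff (a b : ℕ) :
      classOf E a = classOf E b ↔ classOf F (f a) = classOf F (f b) := by
    rw [classOf_eq_classOf_iff hE, classOf_eq_classOf_iff hF, hEF]
  refine ⟨g, hg.to_comp, fun e e' => ?_⟩
  rw [FSJump, FSJump, hran, hran, Set.image_image, Set.image_image]
  exact image_eq_image_congr classOf_iff _ _
end

section
/- The computable FS-jump (=^{ce})⁺ is computably bireducible with the relation on ℕ given by: e ~ e' iff the set of columns {(W_e)_(n) : n ∈ ℕ} equals {(W_{e'})_(n) : n ∈ ℕ}. -/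
/-- Equality of c.e. sets: `e =^{ce} e'` iff `W_e = W_{e'}`. -/
def eqCE : ℕ → ℕ → Prop := fun e e' => WSet e = WSet e'

/-- The set of columns of a set `A ⊆ ℕ`, where the `n`-th column is `{p : ⟨n,p⟩ ∈ A}`. -/
def columns (A : Set ℕ) : Set (Set ℕ) :=
  Set.range fun n => {p | Nat.pair n p ∈ A}

/-!
An index `e` has two invariants: the family `{W_k : k ∈ ran φ_e}`, which classifies `(=^{ce})⁺`,
and the family of columns of `W_e`. By the s-m-n theorem the columns of `W_e` are `W_{s(e,n)}` for
a computable `s`, so any index of `n ↦ s(e,n)` has the columns of `W_e` as its first invariant.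

Conversely, given `e`, one enumerates a set whose column `n + 1` is `W_k` when `φ_e(n) = k`. That
column is empty when `φ_e(n)` diverges, so `∅` may appear although no `W_k` is empty. Therefore
each `W_k` is replaced by the nonempty set `{0} ∪ (W_k + 1)`, and column `0` is left empty to make
`∅` a column in all cases.
-/

open Nat.Partrec (Code)

theorem Reduces.of_injective {α β : Type*} {u : ℕ → α} {v : ℕ → β} {F : α → β}
    (hF : F.Injective) {f : ℕ → ℕ} (hf : Computable f) (hfF : ∀ n, v (f n) = F (u n)) :
    Reduces (fun m n => u m = u n) (fun m n => v m = v n) :=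
  ⟨f, hf, fun m n => by simp only [hfF, hF.eq_iff]⟩

theorem FSJump_ker_iff {α : Type*} (v : ℕ → α) (e e' : ℕ) :
    FSJump (fun m n => v m = v n) e e' ↔ v '' (phi e).ran = v '' (phi e').ran := by
  have fiber_injOn : Set.InjOn (fun a => {x | a = v x}) (Set.range v) := by
    rintro _ ⟨k, rfl⟩ b - hab
    exact ((Set.ext_iff.1 hab k).1 rfl).symm
  have image_classOf (S : Set ℕ) :
      classOf (fun m n => v m = v n) '' S = (fun a => {x | a = v x}) '' (v '' S) :=
    Set.image_comp (fun a => {x | a = v x}) v S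
  rw [FSJump, image_classOf, image_classOf,
    fiber_injOn.image_eq_image_iff (Set.image_subset_range _ _) (Set.image_subset_range _ _)]

/-- The family `{W_k : k ∈ ran φ_e}` of c.e. sets, a complete invariant of `e` for `(=^{ce})⁺`. -/
def ceFamily (e : ℕ) : Set (Set ℕ) := WSet '' (phi e).ran

theorem FSJump_eqCE_eq_ker_ceFamily : FSJump eqCE = fun e e' => ceFamily e = ceFamily e' :=
  funext₂ fun e e' => propext (FSJump_ker_iff WSet e e')

/-- The `n`-th column of `A`. -/
def column (A : Set ℕ) (n : ℕ) : Set ℕ := {p | Nat.pair n p ∈ A}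

theorem columns_eq_range_column (A : Set ℕ) : columns A = Set.range (column A) := rfl

theorem partrec₂_phi : Partrec₂ phi :=
  Code.eval_part.comp₂ ((Computable.ofNat _).comp Computable.fst) Computable.snd

theorem exists_phi_eq {f : ℕ →. ℕ} (hf : Partrec f) : ∃ e, phi e = f := by
  obtain ⟨c, rfl⟩ := Code.exists_code.1 (Partrec.nat_iff.1 hf)
  exact ⟨Encodable.encode c, by rw [phi, Denumerable.ofNat_encode]⟩

/-- The s-m-n function: an index of `p ↦ φ_e(⟨n, p⟩)`. -/
def curryIndex (e n : ℕ) : ℕ := Encodable.encode (Code.curry (Denumerable.ofNat Code e) n)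

theorem computable₂_curryIndex : Computable₂ curryIndex :=
  Computable.encode.comp
    (Code.primrec₂_curry.to_comp.comp ((Computable.ofNat _).comp Computable.fst) Computable.snd)

theorem phi_curryIndex (e n p : ℕ) : phi (curryIndex e n) p = phi e (Nat.pair n p) := by
  rw [phi, curryIndex, Denumerable.ofNat_encode, Code.eval_curry, phi]

theorem WSet_curryIndex (e n : ℕ) : WSet (curryIndex e n) = column (WSet e) n := by
  ext p
  exact (congrArg Part.Dom (phi_curryIndex e n p)).to_iff

theorem exists_computable_phi_eq {f : ℕ → ℕ →. ℕ} (hf : Partrec₂ f) :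
    ∃ g : ℕ → ℕ, Computable g ∧ ∀ e, phi (g e) = f e := by
  have uncurried : Partrec fun m : ℕ => f m.unpair.1 m.unpair.2 :=
    hf.comp (Computable.fst.comp Computable.unpair) (Computable.snd.comp Computable.unpair)
  obtain ⟨c, hc⟩ := exists_phi_eq uncurried
  refine ⟨curryIndex c, computable₂_curryIndex.comp (Computable.const c) Computable.id, ?_⟩
  intro e
  funext p
  simp only [phi_curryIndex, hc, Nat.unpair_pair]

theorem exists_computable_ceFamily_eq_columns :
    ∃ g : ℕ → ℕ, Computable g ∧ ∀ e, ceFamily (g e) = columns (WSet e) := by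
  obtain ⟨g, hg, hphi⟩ := exists_computable_phi_eq computable₂_curryIndex.partrec₂
  refine ⟨g, hg, fun e => ?_⟩
  have ran_eq : (phi (g e)).ran = Set.range (curryIndex e) := by
    ext k
    simp [hphi, PFun.ran, eq_comm]
  calc ceFamily (g e) = Set.range (WSet ∘ curryIndex e) := by
        rw [ceFamily, ran_eq, Set.range_comp]
    _ = Set.range (column (WSet e)) := congrArg Set.range (funext (WSet_curryIndex e))
    _ = columns (WSet e) := (columns_eq_range_column _).symm

/-- The shifted copy `{0} ∪ (A + 1)` of `A`, which is never empty and still determines `A`. -/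
def marked (A : Set ℕ) : Set ℕ := insert 0 (Nat.succ '' A)

theorem marked_nonempty (A : Set ℕ) : (marked A).Nonempty := Set.insert_nonempty _ _

theorem marked_injective : Function.Injective marked := by
  have preimage_marked (A : Set ℕ) : Nat.succ ⁻¹' marked A = A := by
    ext q
    simp [marked]
  exact Function.LeftInverse.injective preimage_marked

/-- The family of columns that encodes `𝒜`: the marked members of `𝒜`, together with `∅`. -/
def markedFamily (𝒜 : Set (Set ℕ)) : Set (Set ℕ) := insert ∅ (marked '' 𝒜)

theorem markedFamily_injective : Function.Injective markedFamily := by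
  have preimage_markedFamily (𝒜 : Set (Set ℕ)) : marked ⁻¹' markedFamily 𝒜 = 𝒜 := by
    ext A
    simp [markedFamily, (marked_nonempty A).ne_empty, marked_injective.eq_iff]
  exact Function.LeftInverse.injective preimage_markedFamily

/-- A partial function with domain `marked (W_k)`, computable uniformly in `k`. -/
def markedPhi (k : ℕ) : ℕ →. ℕ := fun q => Nat.casesOn q (Part.some 0) (phi k)

theorem partrec₂_markedPhi : Partrec₂ markedPhi :=
  Partrec.nat_casesOn_right Computable.snd (Computable.const 0)
    (partrec₂_phi.comp (Computable.fst.comp Computable.fst) Computable.snd)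

theorem dom_markedPhi (k : ℕ) : (markedPhi k).Dom = marked (WSet k) := by
  ext q
  cases q <;> simp [markedPhi, marked, WSet, PFun.mem_dom]

/-- A partial function whose domain has column `n + 1` equal to `marked (W_k)` if `φ_e(n) = k`, and
empty if `φ_e(n)` diverges. Column `0` is empty because `Nat.ppred 0 = none`. -/
def markedColumnsPhi (e : ℕ) : ℕ →. ℕ := fun m =>
  (Nat.ppred m.unpair.1 : Part ℕ).bind fun n => (phi e n).bind fun k => markedPhi k m.unpair.2

theorem partrec₂_markedColumnsPhi : Partrec₂ markedColumnsPhi := by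
  have column : Computable fun a : ℕ × ℕ => a.2.unpair.1 :=
    Computable.fst.comp (Computable.unpair.comp Computable.snd)
  have entry : Computable fun a : ((ℕ × ℕ) × ℕ) × ℕ => a.1.1.2.unpair.2 :=
    Computable.snd.comp (Computable.unpair.comp
      (Computable.snd.comp (Computable.fst.comp Computable.fst)))
  have phi_column : Partrec fun a : (ℕ × ℕ) × ℕ => phi a.1.1 a.2 :=
    partrec₂_phi.comp (Computable.fst.comp Computable.fst) Computable.snd
  exact ((Partrec.nat_iff.2 Nat.Partrec.ppred).comp column).bind
    (phi_column.bind (partrec₂_markedPhi.comp Computable.snd entry))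

theorem column_zero_dom_markedColumnsPhi (e : ℕ) : column (markedColumnsPhi e).Dom 0 = ∅ := by
  ext q
  simp [column, markedColumnsPhi]

theorem column_succ_dom_markedColumnsPhi (e n : ℕ) :
    column (markedColumnsPhi e).Dom (n + 1) = ⋃ k ∈ phi e n, marked (WSet k) := by
  ext q
  simp only [column, markedColumnsPhi, ← dom_markedPhi, PFun.mem_dom, Nat.unpair_pair,
    Nat.ppred_succ, Part.coe_some, Part.bind_some, Part.mem_bind_iff, Set.mem_ofPred_eq,
    Set.mem_iUnion, exists_prop, ← exists_and_left]
  exact exists_comm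

theorem columns_dom_markedColumnsPhi (e : ℕ) :
    columns (markedColumnsPhi e).Dom = markedFamily (ceFamily e) := by
  have column_zero := column_zero_dom_markedColumnsPhi e
  have column_succ_of_mem {n k : ℕ} (hk : k ∈ phi e n) :
      column (markedColumnsPhi e).Dom (n + 1) = marked (WSet k) := by
    simp [column_succ_dom_markedColumnsPhi, Part.eq_some_iff.2 hk]
  have column_succ_of_not_dom {n : ℕ} (hn : ¬(phi e n).Dom) :
      column (markedColumnsPhi e).Dom (n + 1) = ∅ := by
    simp [column_succ_dom_markedColumnsPhi, Part.eq_none_iff'.2 hn]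
  rw [columns_eq_range_column]
  apply Set.Subset.antisymm
  · rintro _ ⟨_ | n, rfl⟩
    · exact .inl column_zero
    · by_cases hn : (phi e n).Dom
      · obtain ⟨k, hk⟩ := Part.dom_iff_mem.1 hn
        exact .inr ⟨WSet k, ⟨k, ⟨n, hk⟩, rfl⟩, (column_succ_of_mem hk).symm⟩
      · exact .inl (column_succ_of_not_dom hn)
  · rintro _ (rfl | ⟨_, ⟨k, ⟨n, hk⟩, rfl⟩, rfl⟩)
    · exact ⟨0, column_zero⟩
    · exact ⟨n + 1, column_succ_of_mem hk⟩

theorem exists_computable_columns_eq_markedFamily :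
    ∃ g : ℕ → ℕ, Computable g ∧ ∀ e, columns (WSet (g e)) = markedFamily (ceFamily e) := by
  obtain ⟨g, hg, hphi⟩ := exists_computable_phi_eq partrec₂_markedColumnsPhi
  exact ⟨g, hg, fun e => by rw [WSet, hphi, columns_dom_markedColumnsPhi]⟩

/-- `(=^{ce})⁺` is computably bireducible with the relation identifying codes whose
c.e. sets have the same set of columns. -/
theorem jump_eqCE_bireducible_columns :
    Reduces (FSJump eqCE) (fun e e' => columns (WSet e) = columns (WSet e')) ∧
      Reduces (fun e e' => columns (WSet e) = columns (WSet e')) (FSJump eqCE) := by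
  rw [FSJump_eqCE_eq_ker_ceFamily]
  obtain ⟨f, hf, columns_f⟩ := exists_computable_columns_eq_markedFamily
  obtain ⟨g, hg, ceFamily_g⟩ := exists_computable_ceFamily_eq_columns
  exact ⟨.of_injective markedFamily_injective hf columns_f,
    .of_injective Function.injective_id hg ceFamily_g⟩
end
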